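/- arXiv:1601.07979 — 2 statements merged into one kernel-verified Lean document; each statement's English description precedes it below -/
import Mathlib

section
/- Let (A, α_A) be a finite-dimensional Hom-algebra over a field k. Then the dual space A* equipped with the structure map ᾱ(f) = f∘α_A^{-1}, the counit ε̄(f) = f(1_A), and the comultiplication Δ̄(f) = f_[1]⊗f_[2], where f_[1]⊗f_[2] is the unique element of A*⊗A* satisfying f_[1](x) f_[2](y) = f(α_A^{-2}(yx)) for all x,y ∈ A, is a Hom-coalgebra over k (denoted A*^cop). -/
open TensorProduct BigOperators

noncomputable section

variable (k : Type*) [Field k]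

section HomDefs

variable {A B C H U X Y Z : Type*}
variable [AddCommGroup A] [Module k A] [AddCommGroup B] [Module k B]
variable [AddCommGroup C] [Module k C] [AddCommGroup H] [Module k H]
variable [AddCommGroup U] [Module k U] [AddCommGroup X] [Module k X]
variable [AddCommGroup Y] [Module k Y] [AddCommGroup Z] [Module k Z]

/-- A Hom-algebra `(A, α, μ, e)` over `k`. -/
def IsHomAlgebra (α : A ≃ₗ[k] A) (μ : A →ₗ[k] A →ₗ[k] A) (e : A) : Prop :=
  (∀ a b, α (μ a b) = μ (α a) (α b)) ∧
  (∀ a b c, μ (α a) (μ b c) = μ (μ a b) (α c)) ∧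
  α e = e ∧ (∀ a, μ e a = α a) ∧ (∀ a, μ a e = α a)

/-- A Hom-coalgebra `(C, α, Δ, ε)` over `k`. -/
def IsHomCoalgebra (α : C ≃ₗ[k] C) (Δ : C →ₗ[k] C ⊗[k] C) (ε : C →ₗ[k] k) : Prop :=
  (∀ c, Δ (α c) = TensorProduct.map α.toLinearMap α.toLinearMap (Δ c)) ∧
  (∀ c, ε (α c) = ε c) ∧
  (∀ c, TensorProduct.map α.toLinearMap Δ (Δ c)
      = TensorProduct.assoc k C C C (TensorProduct.map Δ α.toLinearMap (Δ c))) ∧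
  (∀ c, TensorProduct.lid k C (TensorProduct.map ε (LinearMap.id : C →ₗ[k] C) (Δ c)) = α c) ∧
  (∀ c, TensorProduct.rid k C (TensorProduct.map (LinearMap.id : C →ₗ[k] C) ε (Δ c)) = α c)

/-- A Hom-bialgebra `(H, α, μ, e, Δ, ε)` over `k`. -/
def IsHomBialgebra (α : H ≃ₗ[k] H) (μ : H →ₗ[k] H →ₗ[k] H) (e : H)
    (Δ : H →ₗ[k] H ⊗[k] H) (ε : H →ₗ[k] k) : Prop :=
  IsHomAlgebra k α μ e ∧ IsHomCoalgebra k α Δ ε ∧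
  (∀ a b, Δ (μ a b) = TensorProduct.map (TensorProduct.lift μ) (TensorProduct.lift μ)
      (TensorProduct.tensorTensorTensorComm k H H H H (Δ a ⊗ₜ[k] Δ b))) ∧
  Δ e = e ⊗ₜ[k] e ∧
  (∀ a b, ε (μ a b) = ε a * ε b) ∧
  ε e = 1

/-- A right `A`-Hom-module `(U, αU, act)`. -/
def IsHomModule (αA : A ≃ₗ[k] A) (μ : A →ₗ[k] A →ₗ[k] A) (e : A)
    (αU : U ≃ₗ[k] U) (act : U →ₗ[k] A →ₗ[k] U) : Prop :=
  (∀ u a, αU (act u a) = act (αU u) (αA a)) ∧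
  (∀ u, act u e = αU u) ∧
  (∀ u a b, act (act u a) (αA b) = act (αU u) (μ a b))

/-- A right `H`-Hom-comodule `(U, αU, ρ)`. -/
def IsHomComodule (αH : H ≃ₗ[k] H) (Δ : H →ₗ[k] H ⊗[k] H) (ε : H →ₗ[k] k)
    (αU : U ≃ₗ[k] U) (ρ : U →ₗ[k] U ⊗[k] H) : Prop :=
  (∀ u, ρ (αU u) = TensorProduct.map αU.toLinearMap αH.toLinearMap (ρ u)) ∧
  (∀ u, TensorProduct.map αU.toLinearMap Δ (ρ u)
      = TensorProduct.assoc k U H H (TensorProduct.map ρ αH.toLinearMap (ρ u))) ∧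
  (∀ u, TensorProduct.rid k U (TensorProduct.map (LinearMap.id : U →ₗ[k] U) ε (ρ u)) = αU u)

/-- A Hom-cotwistor `φ : B ⊗ H → H ⊗ B` between Hom-coalgebras `B` and `H`
(conditions (M1)-(M4) together with compatibility with the structure maps). -/
def IsHomCotwistor (αB : B ≃ₗ[k] B) (ΔB : B →ₗ[k] B ⊗[k] B) (εB : B →ₗ[k] k)
    (αH : H ≃ₗ[k] H) (ΔH : H →ₗ[k] H ⊗[k] H) (εH : H →ₗ[k] k)
    (φ : B ⊗[k] H →ₗ[k] H ⊗[k] B) : Prop :=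
  (φ ∘ₗ TensorProduct.map αB.toLinearMap αH.toLinearMap
     = TensorProduct.map αH.toLinearMap αB.toLinearMap ∘ₗ φ) ∧
  -- (M1)
  (TensorProduct.map αH.toLinearMap ΔB ∘ₗ φ
     = (TensorProduct.assoc k H B B).toLinearMap
       ∘ₗ TensorProduct.map φ (LinearMap.id : B →ₗ[k] B)
       ∘ₗ (TensorProduct.assoc k B H B).symm.toLinearMap
       ∘ₗ TensorProduct.map (LinearMap.id : B →ₗ[k] B) φ
       ∘ₗ (TensorProduct.assoc k B B H).toLinearMap
       ∘ₗ TensorProduct.map ΔB αH.toLinearMap) ∧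
  -- (M2)
  (TensorProduct.map ΔH αB.toLinearMap ∘ₗ φ
     = (TensorProduct.assoc k H H B).symm.toLinearMap
       ∘ₗ TensorProduct.map (LinearMap.id : H →ₗ[k] H) φ
       ∘ₗ (TensorProduct.assoc k H B H).toLinearMap
       ∘ₗ TensorProduct.map φ (LinearMap.id : H →ₗ[k] H)
       ∘ₗ (TensorProduct.assoc k B H H).symm.toLinearMap
       ∘ₗ TensorProduct.map αB.toLinearMap ΔH) ∧
  -- (M3)
  ((TensorProduct.lid k B).toLinearMap
      ∘ₗ TensorProduct.map εH (LinearMap.id : B →ₗ[k] B) ∘ₗ φ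
     = (TensorProduct.rid k B).toLinearMap
        ∘ₗ TensorProduct.map (LinearMap.id : B →ₗ[k] B) εH) ∧
  -- (M4)
  ((TensorProduct.rid k H).toLinearMap
      ∘ₗ TensorProduct.map (LinearMap.id : H →ₗ[k] H) εB ∘ₗ φ
     = (TensorProduct.lid k H).toLinearMap
        ∘ₗ TensorProduct.map εB (LinearMap.id : H →ₗ[k] H))

/-- A monoidal Hom-cotwistor between Hom-bialgebras `B` and `H`:
a Hom-cotwistor additionally satisfying (M5) and (M6). -/
def IsMonoidalHomCotwistor (αB : B ≃ₗ[k] B) (μB : B →ₗ[k] B →ₗ[k] B) (eB : B)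
    (ΔB : B →ₗ[k] B ⊗[k] B) (εB : B →ₗ[k] k)
    (αH : H ≃ₗ[k] H) (μH : H →ₗ[k] H →ₗ[k] H) (eH : H)
    (ΔH : H →ₗ[k] H ⊗[k] H) (εH : H →ₗ[k] k)
    (φ : B ⊗[k] H →ₗ[k] H ⊗[k] B) : Prop :=
  IsHomCotwistor k αB ΔB εB αH ΔH εH φ ∧
  -- (M5)
  (TensorProduct.map (TensorProduct.lift μH) (TensorProduct.lift μB)
      ∘ₗ (TensorProduct.tensorTensorTensorComm k H B H B).toLinearMap
      ∘ₗ TensorProduct.map φ φ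
    = φ ∘ₗ TensorProduct.map (TensorProduct.lift μB) (TensorProduct.lift μH)
        ∘ₗ (TensorProduct.tensorTensorTensorComm k B H B H).toLinearMap) ∧
  -- (M6)
  φ (eB ⊗ₜ[k] eH) = eH ⊗ₜ[k] eB

/-- A Hom-entwining map `Φ : H ⊗ A → A ⊗ H` (conditions (E1)-(E4) together
with compatibility with the structure maps); `(H, A, Φ)` is then a
Hom-entwining structure. -/
def IsHomEntwining (αA : A ≃ₗ[k] A) (μ : A →ₗ[k] A →ₗ[k] A) (e : A)
    (αH : H ≃ₗ[k] H) (Δ : H →ₗ[k] H ⊗[k] H) (ε : H →ₗ[k] k)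
    (Φ : H ⊗[k] A →ₗ[k] A ⊗[k] H) : Prop :=
  (TensorProduct.map αA.toLinearMap αH.toLinearMap ∘ₗ Φ
     = Φ ∘ₗ TensorProduct.map αH.toLinearMap αA.toLinearMap) ∧
  -- (E1)
  (TensorProduct.map (TensorProduct.lift μ) αH.toLinearMap
      ∘ₗ (TensorProduct.assoc k A A H).symm.toLinearMap
      ∘ₗ TensorProduct.map (LinearMap.id : A →ₗ[k] A) Φ
      ∘ₗ (TensorProduct.assoc k A H A).toLinearMap
      ∘ₗ TensorProduct.map Φ (LinearMap.id : A →ₗ[k] A)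
    = Φ ∘ₗ TensorProduct.map αH.toLinearMap (TensorProduct.lift μ)
        ∘ₗ (TensorProduct.assoc k H A A).toLinearMap) ∧
  -- (E2)
  (TensorProduct.map αA.toLinearMap Δ ∘ₗ Φ
     = (TensorProduct.assoc k A H H).toLinearMap
       ∘ₗ TensorProduct.map Φ (LinearMap.id : H →ₗ[k] H)
       ∘ₗ (TensorProduct.assoc k H A H).symm.toLinearMap
       ∘ₗ TensorProduct.map (LinearMap.id : H →ₗ[k] H) Φ
       ∘ₗ (TensorProduct.assoc k H H A).toLinearMap
       ∘ₗ TensorProduct.map Δ αA.toLinearMap) ∧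
  -- (E3)
  ((TensorProduct.rid k A).toLinearMap
      ∘ₗ TensorProduct.map (LinearMap.id : A →ₗ[k] A) ε ∘ₗ Φ
     = (TensorProduct.lid k A).toLinearMap
        ∘ₗ TensorProduct.map ε (LinearMap.id : A →ₗ[k] A)) ∧
  -- (E4)
  (∀ h, Φ (h ⊗ₜ[k] e) = e ⊗ₜ[k] h)

/-- A Hom-monoidal entwining datum between Hom-bialgebras `H` (coalgebra side)
and `A` (algebra side): a Hom-entwining map additionally satisfying (E5), (E6). -/
def IsHomMonoidalEntwining (αA : A ≃ₗ[k] A) (μA : A →ₗ[k] A →ₗ[k] A) (eA : A)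
    (ΔA : A →ₗ[k] A ⊗[k] A) (εA : A →ₗ[k] k)
    (αH : H ≃ₗ[k] H) (μH : H →ₗ[k] H →ₗ[k] H) (eH : H)
    (ΔH : H →ₗ[k] H ⊗[k] H) (εH : H →ₗ[k] k)
    (Φ : H ⊗[k] A →ₗ[k] A ⊗[k] H) : Prop :=
  IsHomEntwining k αA μA eA αH ΔH εH Φ ∧
  -- (E5)
  (TensorProduct.map (LinearMap.id : A ⊗[k] A →ₗ[k] A ⊗[k] A) (TensorProduct.lift μH)
      ∘ₗ (TensorProduct.tensorTensorTensorComm k A H A H).toLinearMap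
      ∘ₗ TensorProduct.map Φ Φ
      ∘ₗ (TensorProduct.tensorTensorTensorComm k H H A A).toLinearMap
      ∘ₗ TensorProduct.map
           (TensorProduct.map (αH.toLinearMap ∘ₗ αH.toLinearMap)
             (αH.toLinearMap ∘ₗ αH.toLinearMap)) ΔA
    = TensorProduct.map ΔA (αH.toLinearMap ∘ₗ αH.toLinearMap)
        ∘ₗ Φ ∘ₗ TensorProduct.map (TensorProduct.lift μH) (LinearMap.id : A →ₗ[k] A)) ∧
  -- (E6)
  (∀ a, TensorProduct.lid k H
      (TensorProduct.map εA (LinearMap.id : H →ₗ[k] H) (Φ (eH ⊗ₜ[k] a))) = εA a • eH)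

/-- An `n`-th Hom-entwined module over a Hom-entwining structure `(H, A, Φ)`. -/
def IsHomEntwinedModule (αA : A ≃ₗ[k] A) (μ : A →ₗ[k] A →ₗ[k] A) (e : A)
    (αH : H ≃ₗ[k] H) (Δ : H →ₗ[k] H ⊗[k] H) (ε : H →ₗ[k] k)
    (Φ : H ⊗[k] A →ₗ[k] A ⊗[k] H) (n : ℤ)
    (αU : U ≃ₗ[k] U) (act : U →ₗ[k] A →ₗ[k] U) (ρ : U →ₗ[k] U ⊗[k] H) : Prop :=
  IsHomModule k αA μ e αU act ∧
  IsHomComodule k αH Δ ε αU ρ ∧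
  ∀ u a, ρ (act u a)
    = TensorProduct.map
        (TensorProduct.lift act ∘ₗ
          TensorProduct.map (LinearMap.id : U →ₗ[k] U) αA.toLinearMap)
        ((αH ^ (-n)).toLinearMap)
        ((TensorProduct.assoc k U A H).symm
          (TensorProduct.map (LinearMap.id : U →ₗ[k] U)
            (Φ ∘ₗ TensorProduct.map ((αH ^ (n + 1)).toLinearMap)
               (LinearMap.id : A →ₗ[k] A))
            (TensorProduct.assoc k U H A (ρ u ⊗ₜ[k] a))))

/-- A Hom-Long dimodule over a Hom-bialgebra `H`. -/
def IsHomLongDimodule (αH : H ≃ₗ[k] H) (μ : H →ₗ[k] H →ₗ[k] H) (e : H)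
    (Δ : H →ₗ[k] H ⊗[k] H) (ε : H →ₗ[k] k)
    (αU : U ≃ₗ[k] U) (act : U →ₗ[k] H →ₗ[k] U) (ρ : U →ₗ[k] U ⊗[k] H) : Prop :=
  IsHomModule k αH μ e αU act ∧
  IsHomComodule k αH Δ ε αU ρ ∧
  ∀ u h, ρ (act u h)
    = TensorProduct.map (TensorProduct.lift act) αH.toLinearMap
        ((TensorProduct.assoc k U H H).symm
          (TensorProduct.map (LinearMap.id : U →ₗ[k] U)
            (TensorProduct.comm k H H).toLinearMap
            (TensorProduct.assoc k U H H (ρ u ⊗ₜ[k] αH h))))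

/-- A right `H`-comodule algebra over a Hom-bialgebra `H`. -/
def IsHomComoduleAlgebra (αH : H ≃ₗ[k] H) (μH : H →ₗ[k] H →ₗ[k] H) (eH : H)
    (ΔH : H →ₗ[k] H ⊗[k] H) (εH : H →ₗ[k] k)
    (αA : A ≃ₗ[k] A) (μA : A →ₗ[k] A →ₗ[k] A) (eA : A)
    (ρA : A →ₗ[k] A ⊗[k] H) : Prop :=
  IsHomAlgebra k αA μA eA ∧
  IsHomComodule k αH ΔH εH αA ρA ∧
  (∀ a b, ρA (μA a b) = TensorProduct.map (TensorProduct.lift μA) (TensorProduct.lift μH)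
      (TensorProduct.tensorTensorTensorComm k A H A H (ρA a ⊗ₜ[k] ρA b))) ∧
  ρA eA = eA ⊗ₜ[k] eH

/-- A right `H`-module coalgebra over a Hom-bialgebra `H`. -/
def IsHomModuleCoalgebra (αH : H ≃ₗ[k] H) (μH : H →ₗ[k] H →ₗ[k] H) (eH : H)
    (ΔH : H →ₗ[k] H ⊗[k] H) (εH : H →ₗ[k] k)
    (αC : C ≃ₗ[k] C) (ΔC : C →ₗ[k] C ⊗[k] C) (εC : C →ₗ[k] k)
    (act : C →ₗ[k] H →ₗ[k] C) : Prop :=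
  IsHomCoalgebra k αC ΔC εC ∧
  IsHomModule k αH μH eH αC act ∧
  (∀ c h, ΔC (act c h) = TensorProduct.map (TensorProduct.lift act) (TensorProduct.lift act)
      (TensorProduct.tensorTensorTensorComm k C C H H (ΔC c ⊗ₜ[k] ΔH h))) ∧
  (∀ c h, εC (act c h) = εC c * εH h)

/-- A Hom-Hopf algebra `(H, α, μ, e, Δ, ε, S)` over `k`. -/
def IsHomHopf (αH : H ≃ₗ[k] H) (μ : H →ₗ[k] H →ₗ[k] H) (e : H)
    (Δ : H →ₗ[k] H ⊗[k] H) (ε : H →ₗ[k] k) (S : H →ₗ[k] H) : Prop :=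
  IsHomBialgebra k αH μ e Δ ε ∧
  (∀ h, S (αH h) = αH (S h)) ∧
  (∀ h, TensorProduct.lift μ
      (TensorProduct.map S (LinearMap.id : H →ₗ[k] H) (Δ h)) = ε h • e) ∧
  (∀ h, TensorProduct.lift μ
      (TensorProduct.map (LinearMap.id : H →ₗ[k] H) S (Δ h)) = ε h • e)

/-- A `p`-th right-right Yetter-Drinfeld module over a Hom-Hopf algebra `H`. -/
def IsYetterDrinfeld (αH : H ≃ₗ[k] H) (μ : H →ₗ[k] H →ₗ[k] H) (e : H)
    (Δ : H →ₗ[k] H ⊗[k] H) (ε : H →ₗ[k] k) (S : H →ₗ[k] H) (p : ℤ)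
    (αU : U ≃ₗ[k] U) (act : U →ₗ[k] H →ₗ[k] U) (ρ : U →ₗ[k] U ⊗[k] H) : Prop :=
  IsHomModule k αH μ e αU act ∧
  IsHomComodule k αH Δ ε αU ρ ∧
  ∀ u h, ρ (act u h)
    = TensorProduct.map
        (TensorProduct.lift act ∘ₗ
          TensorProduct.map (LinearMap.id : U →ₗ[k] U) αH.symm.toLinearMap)
        (TensorProduct.lift μ ∘ₗ
          TensorProduct.map (S ∘ₗ (αH ^ (p - 2)).toLinearMap)
            (TensorProduct.lift μ ∘ₗ
              TensorProduct.map αH.symm.toLinearMap ((αH ^ (p - 4)).toLinearMap)))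
        (TensorProduct.tensorTensorTensorComm k U H H (H ⊗[k] H)
          (TensorProduct.map (LinearMap.id : U ⊗[k] H →ₗ[k] U ⊗[k] H)
            (TensorProduct.leftComm k H H H).toLinearMap
            (TensorProduct.tensorTensorTensorComm k U H H (H ⊗[k] H)
              (ρ u ⊗ₜ[k]
                TensorProduct.map (LinearMap.id : H →ₗ[k] H) Δ (Δ h)))))

/-- The smash coproduct comultiplication on `B ⊗ H` induced by
`φ : B ⊗ H → H ⊗ B`: `Δ(b ⊗ h) = (b₁ ⊗ (h₁)^φ) ⊗ ((b₂)^φ ⊗ h₂)`. -/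
def smashComul (φ : B ⊗[k] H →ₗ[k] H ⊗[k] B) (ΔB : B →ₗ[k] B ⊗[k] B)
    (ΔH : H →ₗ[k] H ⊗[k] H) : B ⊗[k] H →ₗ[k] (B ⊗[k] H) ⊗[k] (B ⊗[k] H) :=
  (TensorProduct.assoc k B H (B ⊗[k] H)).symm.toLinearMap
  ∘ₗ TensorProduct.map (LinearMap.id : B →ₗ[k] B)
       (TensorProduct.assoc k H B H).toLinearMap
  ∘ₗ TensorProduct.map (LinearMap.id : B →ₗ[k] B)
       (TensorProduct.map φ (LinearMap.id : H →ₗ[k] H))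
  ∘ₗ TensorProduct.map (LinearMap.id : B →ₗ[k] B)
       (TensorProduct.assoc k B H H).symm.toLinearMap
  ∘ₗ (TensorProduct.assoc k B B (H ⊗[k] H)).toLinearMap
  ∘ₗ TensorProduct.map ΔB ΔH

/-- The smash coproduct counit on `B ⊗ H`: `ε(b ⊗ h) = εB(b) εH(h)`. -/
def smashCounit (εB : B →ₗ[k] k) (εH : H →ₗ[k] k) : B ⊗[k] H →ₗ[k] k :=
  (TensorProduct.lid k k).toLinearMap ∘ₗ TensorProduct.map εB εH

/-- The componentwise product on `B ⊗ H`: `(a ⊗ h)(b ⊗ g) = ab ⊗ hg`. -/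
def smashMul (μB : B →ₗ[k] B →ₗ[k] B) (μH : H →ₗ[k] H →ₗ[k] H) :
    B ⊗[k] H →ₗ[k] B ⊗[k] H →ₗ[k] B ⊗[k] H :=
  (TensorProduct.mk k (B ⊗[k] H) (B ⊗[k] H)).compr₂
    (TensorProduct.map (TensorProduct.lift μB) (TensorProduct.lift μH)
      ∘ₗ (TensorProduct.tensorTensorTensorComm k B H B H).toLinearMap)

/-- Threefold "componentwise comultiplication" `(C⊗C)⊗C → ((C⊗C)⊗C) ⊗ ((C⊗C)⊗C)`
obtained by applying `Δ2` to each factor and pairing the first and second legs. -/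
def convDelta3 (Δ2 : C →ₗ[k] C ⊗[k] C) :
    (C ⊗[k] C) ⊗[k] C →ₗ[k] ((C ⊗[k] C) ⊗[k] C) ⊗[k] ((C ⊗[k] C) ⊗[k] C) :=
  (TensorProduct.tensorTensorTensorComm k (C ⊗[k] C) (C ⊗[k] C) C C).toLinearMap
  ∘ₗ TensorProduct.map (TensorProduct.tensorTensorTensorComm k C C C C).toLinearMap
       (LinearMap.id : C ⊗[k] C →ₗ[k] C ⊗[k] C)
  ∘ₗ TensorProduct.map (TensorProduct.map Δ2 Δ2) Δ2

/-- The map `ξ_{X,Y}(x ⊗ y) = α_X⁻¹(x)·α_H^m(y₍₁₎) ⊗ α_Y⁻¹(y₍₀₎)` for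
Hom-Long dimodules `X`, `Y`. -/
def longXi (m : ℤ) (αH : H ≃ₗ[k] H) (αX : X ≃ₗ[k] X) (αY : Y ≃ₗ[k] Y)
    (act : X →ₗ[k] H →ₗ[k] X) (ρ : Y →ₗ[k] Y ⊗[k] H) : X ⊗[k] Y →ₗ[k] X ⊗[k] Y :=
  TensorProduct.map
      (TensorProduct.lift act ∘ₗ
        TensorProduct.map (LinearMap.id : X →ₗ[k] X) ((αH ^ m).toLinearMap))
      αY.symm.toLinearMap
    ∘ₗ (TensorProduct.assoc k X H Y).symm.toLinearMap
    ∘ₗ TensorProduct.map (LinearMap.id : X →ₗ[k] X) (TensorProduct.comm k Y H).toLinearMap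
    ∘ₗ TensorProduct.map αX.symm.toLinearMap ρ

/-- The associativity constraint `a_{X,Y,Z}((x⊗y)⊗z) = α_X^{i+1}(x) ⊗ (y ⊗ α_Z^{-j-1}(z))`. -/
def homAssoc (i j : ℤ) (αX : X ≃ₗ[k] X) (αZ : Z ≃ₗ[k] Z) :
    (X ⊗[k] Y) ⊗[k] Z ≃ₗ[k] X ⊗[k] (Y ⊗[k] Z) :=
  (TensorProduct.assoc k X Y Z).trans
    (TensorProduct.congr (αX ^ (i + 1))
      (TensorProduct.congr (LinearEquiv.refl k Y) (αZ ^ (-j - 1))))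

/-- The braiding `τ_{X,Y}(x ⊗ y) = α_Y^{j-i-1}(y₍₀₎) ⊗ α_X^{i-j-1}(x)·α_H^{-p}(y₍₁₎)`
for Yetter-Drinfeld modules. -/
def ydTau (p i j : ℤ) (αH : H ≃ₗ[k] H) (αX : X ≃ₗ[k] X) (αY : Y ≃ₗ[k] Y)
    (act : X →ₗ[k] H →ₗ[k] X) (ρ : Y →ₗ[k] Y ⊗[k] H) : X ⊗[k] Y →ₗ[k] Y ⊗[k] X :=
  TensorProduct.map ((αY ^ (j - i - 1)).toLinearMap)
      (TensorProduct.lift act ∘ₗ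
        TensorProduct.map ((αX ^ (i - j - 1)).toLinearMap) ((αH ^ (-p)).toLinearMap))
    ∘ₗ (TensorProduct.leftComm k X Y H).toLinearMap
    ∘ₗ TensorProduct.map (LinearMap.id : X →ₗ[k] X) ρ

end HomDefs
theorem dd_ext {V W : Type*} [AddCommGroup V] [Module k V] [FiniteDimensional k V]
    [AddCommGroup W] [Module k W] [FiniteDimensional k W]
    {s t : Module.Dual k V ⊗[k] Module.Dual k W}
    (h : ∀ x y, TensorProduct.dualDistrib k V W s (x ⊗ₜ[k] y)
      = TensorProduct.dualDistrib k V W t (x ⊗ₜ[k] y)) : s = t := by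
  apply (TensorProduct.dualDistribEquiv k V W).injective
  apply TensorProduct.ext'
  exact h

theorem dd_ext3 {A : Type*} [AddCommGroup A] [Module k A] [FiniteDimensional k A]
    {s t : Module.Dual k A ⊗[k] (Module.Dual k A ⊗[k] Module.Dual k A)}
    (h : ∀ x y z, TensorProduct.dualDistrib k A (A ⊗[k] A)
        (TensorProduct.map LinearMap.id (TensorProduct.dualDistrib k A A) s) (x ⊗ₜ[k] (y ⊗ₜ[k] z))
      = TensorProduct.dualDistrib k A (A ⊗[k] A)
        (TensorProduct.map LinearMap.id (TensorProduct.dualDistrib k A A) t)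
          (x ⊗ₜ[k] (y ⊗ₜ[k] z))) : s = t := by
  apply (TensorProduct.congr (LinearEquiv.refl k (Module.Dual k A))
    (TensorProduct.dualDistribEquiv k A A)).injective
  apply dd_ext k
  intro x w
  induction w with
  | zero => simp
  | add a b ha hb => rw [TensorProduct.tmul_add, map_add, map_add, ha, hb]
  | tmul y z => exact h x y z

/-- the dual of a finite-dimensional Hom-algebra is a Hom-coalgebra
(`A*^cop`). -/
theorem dual_of_homAlgebra_isHomCoalgebra
    {A : Type*} [AddCommGroup A] [Module k A] [FiniteDimensional k A]
    (αA : A ≃ₗ[k] A) (μ : A →ₗ[k] A →ₗ[k] A) (e : A)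
    (hA : IsHomAlgebra k αA μ e)
    (Δbar : Module.Dual k A →ₗ[k] Module.Dual k A ⊗[k] Module.Dual k A)
    (hΔbar : ∀ (f : Module.Dual k A) (x y : A),
        TensorProduct.dualDistrib k A A (Δbar f) (x ⊗ₜ[k] y)
          = f (αA.symm (αA.symm (μ y x)))) :
    IsHomCoalgebra k αA.symm.dualMap Δbar (Module.Dual.eval k A e) := by
  obtain ⟨hm, hassoc, he, hl, hr⟩ := hA
  have hs : ∀ a b, αA.symm (μ a b) = μ (αA.symm a) (αA.symm b) := by
    intro a b
    rw [LinearEquiv.symm_apply_eq, hm]; simp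
  have he' : αA.symm e = e := by rw [LinearEquiv.symm_apply_eq, he]
  refine ⟨?_, ?_, ?_, ?_, ?_⟩
  · intro f
    apply dd_ext k
    intro x y
    have key : ∀ w : Module.Dual k A ⊗[k] Module.Dual k A,
        TensorProduct.dualDistrib k A A (TensorProduct.map αA.symm.dualMap.toLinearMap
          αA.symm.dualMap.toLinearMap w) (x ⊗ₜ[k] y)
        = TensorProduct.dualDistrib k A A w (αA.symm x ⊗ₜ[k] αA.symm y) := by
      intro w
      induction w with
      | zero => simp
      | add a b ha hb => simp only [map_add, LinearMap.add_apply, ha, hb]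
      | tmul a b => simp
    rw [key, hΔbar, hΔbar, LinearEquiv.dualMap_apply, hs y x]
  · intro f
    simp [he']
  · intro f
    apply dd_ext3 k
    intro x y z
    have key1 : ∀ w : Module.Dual k A ⊗[k] Module.Dual k A,
        TensorProduct.dualDistrib k A (A ⊗[k] A)
          (TensorProduct.map LinearMap.id (TensorProduct.dualDistrib k A A)
            (TensorProduct.map αA.symm.dualMap.toLinearMap Δbar w)) (x ⊗ₜ[k] (y ⊗ₜ[k] z))
        = TensorProduct.dualDistrib k A A w
            (αA.symm x ⊗ₜ[k] αA.symm (αA.symm (μ z y))) := by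
      intro w
      induction w with
      | zero => simp
      | add a b ha hb => simp only [map_add, LinearMap.add_apply, ha, hb]
      | tmul a b => simp [hΔbar]
    have key3 : ∀ (w : Module.Dual k A ⊗[k] Module.Dual k A) (b : Module.Dual k A),
        TensorProduct.dualDistrib k A (A ⊗[k] A)
          (TensorProduct.map LinearMap.id (TensorProduct.dualDistrib k A A)
            (TensorProduct.assoc k _ _ _ (w ⊗ₜ[k] b))) (x ⊗ₜ[k] (y ⊗ₜ[k] z))
        = TensorProduct.dualDistrib k A A w (x ⊗ₜ[k] y) * b z := by
      intro w b
      induction w with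
      | zero => simp
      | add c d hc hd =>
        simp only [TensorProduct.add_tmul, map_add, LinearMap.add_apply, hc, hd, add_mul]
      | tmul c d => simp [mul_assoc]
    have key2 : ∀ w : Module.Dual k A ⊗[k] Module.Dual k A,
        TensorProduct.dualDistrib k A (A ⊗[k] A)
          (TensorProduct.map LinearMap.id (TensorProduct.dualDistrib k A A)
            (TensorProduct.assoc k _ _ _
              (TensorProduct.map Δbar αA.symm.dualMap.toLinearMap w))) (x ⊗ₜ[k] (y ⊗ₜ[k] z))
        = TensorProduct.dualDistrib k A A w
            (αA.symm (αA.symm (μ y x)) ⊗ₜ[k] αA.symm z) := by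
      intro w
      induction w with
      | zero => simp
      | add a b ha hb => simp only [map_add, LinearMap.add_apply, ha, hb]
      | tmul a b =>
        rw [TensorProduct.map_tmul, key3, hΔbar]
        simp
    rw [key1, key2, hΔbar, hΔbar]
    congr 3
    have := hassoc (αA.symm (αA.symm z)) (αA.symm (αA.symm y)) (αA.symm (αA.symm x))
    simp only [LinearEquiv.apply_symm_apply] at this
    simp only [hs]
    exact this.symm
  · intro f
    have key : ∀ (w : Module.Dual k A ⊗[k] Module.Dual k A) (y : A),
        TensorProduct.lid k _ (TensorProduct.map (Module.Dual.eval k A e) LinearMap.id w) y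
        = TensorProduct.dualDistrib k A A w (e ⊗ₜ[k] y) := by
      intro w y
      induction w with
      | zero => simp
      | add a b ha hb => simp only [map_add, LinearMap.add_apply, ha, hb]
      | tmul a b => simp
    ext y
    rw [key, hΔbar, hr]; simp
  · intro f
    have key : ∀ (w : Module.Dual k A ⊗[k] Module.Dual k A) (x : A),
        TensorProduct.rid k _ (TensorProduct.map LinearMap.id (Module.Dual.eval k A e) w) x
        = TensorProduct.dualDistrib k A A w (x ⊗ₜ[k] e) := by
      intro w x
      induction w with
      | zero => simp
      | add a b ha hb => simp only [map_add, LinearMap.add_apply, ha, hb]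
      | tmul a b => simp [mul_comm]
    ext x
    rw [key, hΔbar, hl]; simp
end
end

section
/- Let (B, α_B) and (H, α_H) be Hom-coalgebras over a field k and let φ : B⊗H → H⊗B be a linear map with φ∘(α_B⊗α_H) = (α_H⊗α_B)∘φ, written φ(b⊗h) = Σ h^φ ⊗ b^φ. Define on B⊗H the comultiplication Δ_{B⊗H}(b⊗h) = Σ (b₁ ⊗ (h₁)^φ) ⊗ ((b₂)^φ ⊗ h₂), where φ is applied to b₂⊗h₁, and the counit ε_{B⊗H}(b⊗h) = ε_B(b)ε_H(h). Then φ is a Hom-cotwistor if and only if (B⊗H, α_B⊗α_H, Δ_{B⊗H}, ε_{B⊗H}) is a Hom-coalgebra over k (called the smash coproduct of B and H). -/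
open TensorProduct BigOperators

noncomputable section

variable (k : Type*) [Field k]

section SmashHelpers

variable {k}
variable {B H : Type*} [AddCommGroup B] [Module k B] [AddCommGroup H] [Module k H]

/-- The part of `smashComul` after applying the two comultiplications. -/
def smashCore (φ : B ⊗[k] H →ₗ[k] H ⊗[k] B) :
    (B ⊗[k] B) ⊗[k] (H ⊗[k] H) →ₗ[k] (B ⊗[k] H) ⊗[k] (B ⊗[k] H) :=
  (TensorProduct.assoc k B H (B ⊗[k] H)).symm.toLinearMap
  ∘ₗ TensorProduct.map (LinearMap.id : B →ₗ[k] B)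
       (TensorProduct.assoc k H B H).toLinearMap
  ∘ₗ TensorProduct.map (LinearMap.id : B →ₗ[k] B)
       (TensorProduct.map φ (LinearMap.id : H →ₗ[k] H))
  ∘ₗ TensorProduct.map (LinearMap.id : B →ₗ[k] B)
       (TensorProduct.assoc k B H H).symm.toLinearMap
  ∘ₗ (TensorProduct.assoc k B B (H ⊗[k] H)).toLinearMap

/-- `h' ⊗ b' ↦ (b ⊗ h') ⊗ (b' ⊗ h)`. -/
def smJ (b : B) (h : H) : H ⊗[k] B →ₗ[k] (B ⊗[k] H) ⊗[k] (B ⊗[k] H) :=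
  TensorProduct.map (TensorProduct.mk k B H b) ((TensorProduct.mk k B H).flip h)

lemma smJ_tmul (b b' : B) (h h' : H) :
    smJ (k := k) b h (h' ⊗ₜ b') = (b ⊗ₜ h') ⊗ₜ (b' ⊗ₜ h) := rfl

lemma smashCore_tmul (φ : B ⊗[k] H →ₗ[k] H ⊗[k] B) (b₁ b₂ : B) (h₁ h₂ : H) :
    smashCore φ ((b₁ ⊗ₜ b₂) ⊗ₜ (h₁ ⊗ₜ h₂)) = smJ b₁ h₂ (φ (b₂ ⊗ₜ h₁)) := by
  simp only [smashCore, LinearMap.comp_apply, LinearEquiv.coe_coe, TensorProduct.assoc_tmul,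
    TensorProduct.map_tmul, LinearMap.id_apply, TensorProduct.assoc_symm_tmul]
  generalize φ (b₂ ⊗ₜ h₁) = u
  induction u with
  | zero => simp
  | tmul h b => simp [smJ_tmul]
  | add x y hx hy => simp only [map_add, add_tmul, tmul_add, hx, hy]

lemma smashComul_tmul (φ : B ⊗[k] H →ₗ[k] H ⊗[k] B) (ΔB : B →ₗ[k] B ⊗[k] B)
    (ΔH : H →ₗ[k] H ⊗[k] H) (b : B) (h : H) :
    smashComul k φ ΔB ΔH (b ⊗ₜ h) = smashCore φ (ΔB b ⊗ₜ ΔH h) := rfl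

lemma smashCounit_tmul (εB : B →ₗ[k] k) (εH : H →ₗ[k] k) (b : B) (h : H) :
    smashCounit k εB εH (b ⊗ₜ h) = εB b * εH h := by
  simp [smashCounit]

/-- `ε ⊗ id` on the left. -/
def smL {X Y : Type*} [AddCommGroup X] [Module k X] [AddCommGroup Y] [Module k Y]
    (ε : X →ₗ[k] k) : X ⊗[k] Y →ₗ[k] Y :=
  (TensorProduct.lid k Y).toLinearMap ∘ₗ TensorProduct.map ε LinearMap.id

/-- `id ⊗ ε` on the right. -/
def smR {X Y : Type*} [AddCommGroup X] [Module k X] [AddCommGroup Y] [Module k Y]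
    (ε : Y →ₗ[k] k) : X ⊗[k] Y →ₗ[k] X :=
  (TensorProduct.rid k X).toLinearMap ∘ₗ TensorProduct.map LinearMap.id ε

lemma smL_tmul {X Y : Type*} [AddCommGroup X] [Module k X] [AddCommGroup Y] [Module k Y]
    (ε : X →ₗ[k] k) (x : X) (y : Y) : smL ε (x ⊗ₜ[k] y) = ε x • y := by simp [smL]

lemma smR_tmul {X Y : Type*} [AddCommGroup X] [Module k X] [AddCommGroup Y] [Module k Y]
    (ε : Y →ₗ[k] k) (x : X) (y : Y) : smR ε (x ⊗ₜ[k] y) = ε y • x := by simp [smR]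

/-- `Q(S(t ⊗ s)) = φ(εB t ⊗ s εH)`. -/
lemma Q_core (φ : B ⊗[k] H →ₗ[k] H ⊗[k] B) (εB : B →ₗ[k] k) (εH : H →ₗ[k] k)
    (t : B ⊗[k] B) (s : H ⊗[k] H) :
    TensorProduct.map (smL εB) (smR εH) (smashCore φ (t ⊗ₜ s))
      = φ (smL εB t ⊗ₜ smR εH s) := by
  induction t with
  | zero => simp
  | add x y hx hy => simp only [map_add, add_tmul, hx, hy]
  | tmul b₁ b₂ =>
  induction s with
  | zero => simp
  | add x y hx hy => simp only [map_add, tmul_add, hx, hy]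
  | tmul h₁ h₂ =>
  rw [smashCore_tmul, smL_tmul, smR_tmul, ← smul_tmul', tmul_smul, map_smul, map_smul]
  generalize φ (b₂ ⊗ₜ h₁) = u
  induction u with
  | zero => simp
  | tmul h b =>
    simp only [smJ_tmul, map_tmul, smL_tmul, smR_tmul, ← smul_tmul', tmul_smul]
    rw [smul_comm]
  | add x y hx hy => simp only [map_add, smul_add, hx, hy]

/-- `(id ⊗ εH) ⊗ (id ⊗ εH)` on the core, under (M3). -/
lemma RR_core (φ : B ⊗[k] H →ₗ[k] H ⊗[k] B) (εH : H →ₗ[k] k)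
    (m3 : ∀ b h, smL εH (φ (b ⊗ₜ h)) = εH h • b)
    (t : B ⊗[k] B) (s : H ⊗[k] H) :
    TensorProduct.map (smR εH) (smR εH) (smashCore φ (t ⊗ₜ s))
      = εH (smR εH s) • t := by
  induction t with
  | zero => simp
  | add x y hx hy => simp only [map_add, add_tmul, smul_add, hx, hy]
  | tmul b₁ b₂ =>
  induction s with
  | zero => simp
  | add x y hx hy => simp only [map_add, tmul_add, add_smul, hx, hy]
  | tmul h₁ h₂ =>
  rw [smashCore_tmul, smR_tmul, map_smul, smul_eq_mul, mul_smul, ← tmul_smul, ← m3]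
  generalize φ (b₂ ⊗ₜ h₁) = u
  induction u with
  | zero => simp
  | tmul h b =>
    simp only [smJ_tmul, map_tmul, smL_tmul, smR_tmul, ← smul_tmul', tmul_smul]
  | add x y hx hy => simp only [map_add, smul_add, tmul_add, hx, hy]

/-- `(εB ⊗ id) ⊗ (εB ⊗ id)` on the core, under (M4). -/
lemma LL_core (φ : B ⊗[k] H →ₗ[k] H ⊗[k] B) (εB : B →ₗ[k] k)
    (m4 : ∀ b h, smR εB (φ (b ⊗ₜ h)) = εB b • h)
    (t : B ⊗[k] B) (s : H ⊗[k] H) :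
    TensorProduct.map (smL εB) (smL εB) (smashCore φ (t ⊗ₜ s))
      = εB (smL εB t) • s := by
  induction t with
  | zero => simp
  | add x y hx hy => simp only [map_add, add_tmul, add_smul, hx, hy]
  | tmul b₁ b₂ =>
  induction s with
  | zero => simp
  | add x y hx hy => simp only [map_add, tmul_add, smul_add, hx, hy]
  | tmul h₁ h₂ =>
  rw [smashCore_tmul, smL_tmul, map_smul, smul_eq_mul, mul_smul, smul_tmul', ← m4]
  generalize φ (b₂ ⊗ₜ h₁) = u
  induction u with
  | zero => simp
  | tmul h b =>
    simp only [smJ_tmul, map_tmul, smL_tmul, smR_tmul, ← smul_tmul', tmul_smul]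
    rw [smul_comm]
  | add x y hx hy => simp only [map_add, smul_add, add_tmul, hx, hy]

/-- left counit of the core. -/
lemma counitL_core (φ : B ⊗[k] H →ₗ[k] H ⊗[k] B) (εB : B →ₗ[k] k) (εH : H →ₗ[k] k)
    (m3 : ∀ b h, smL εH (φ (b ⊗ₜ h)) = εH h • b)
    (t : B ⊗[k] B) (s : H ⊗[k] H) :
    smL (smashCounit k εB εH) (smashCore φ (t ⊗ₜ s)) = smL εB t ⊗ₜ smL εH s := by
  induction t with
  | zero => simp
  | add x y hx hy => simp only [map_add, add_tmul, hx, hy]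
  | tmul b₁ b₂ =>
  induction s with
  | zero => simp
  | add x y hx hy => simp only [map_add, tmul_add, hx, hy]
  | tmul h₁ h₂ =>
  rw [smashCore_tmul, smL_tmul, smL_tmul, tmul_smul, ← smul_tmul', smul_comm, smul_tmul', ← m3]
  generalize φ (b₂ ⊗ₜ h₁) = u
  induction u with
  | zero => simp
  | tmul h b =>
    simp only [smJ_tmul, smL_tmul, smashCounit_tmul, ← smul_tmul', mul_smul]
  | add x y hx hy => simp only [map_add, smul_add, add_tmul, hx, hy]

lemma counitR_core (φ : B ⊗[k] H →ₗ[k] H ⊗[k] B) (εB : B →ₗ[k] k) (εH : H →ₗ[k] k)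
    (m4 : ∀ b h, smR εB (φ (b ⊗ₜ h)) = εB b • h)
    (t : B ⊗[k] B) (s : H ⊗[k] H) :
    smR (smashCounit k εB εH) (smashCore φ (t ⊗ₜ s)) = smR εB t ⊗ₜ smR εH s := by
  induction t with
  | zero => simp
  | add x y hx hy => simp only [map_add, add_tmul, hx, hy]
  | tmul b₁ b₂ =>
  induction s with
  | zero => simp
  | add x y hx hy => simp only [map_add, tmul_add, hx, hy]
  | tmul h₁ h₂ =>
  rw [smashCore_tmul, smR_tmul, smR_tmul, ← smul_tmul', ← tmul_smul, smul_comm, ← m4]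
  generalize φ (b₂ ⊗ₜ h₁) = u
  induction u with
  | zero => simp
  | tmul h b =>
    simp only [smJ_tmul, smR_tmul, smashCounit_tmul, tmul_smul, mul_smul]
    rw [smul_comm]
  | add x y hx hy => simp only [map_add, smul_add, tmul_add, hx, hy]

/-- relation of the left counit with `Q`: apply `id ⊗ εH` afterwards. -/
lemma counitL_Q (εB : B →ₗ[k] k) (εH : H →ₗ[k] k) (x : (B ⊗[k] H) ⊗[k] (B ⊗[k] H)) :
    smR εH (smL (smashCounit k εB εH) x)
      = smL εH (TensorProduct.map (smL εB) (smR εH) x) := by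
  induction x with
  | zero => simp
  | add x y hx hy => simp only [map_add, hx, hy]
  | tmul x y =>
  induction x with
  | zero => simp
  | add x y hx hy => simp only [map_add, add_tmul, hx, hy]
  | tmul b h =>
    simp only [map_tmul, smL_tmul, map_smul, smashCounit_tmul, smul_eq_mul]

lemma counitR_Q (εB : B →ₗ[k] k) (εH : H →ₗ[k] k) (x : (B ⊗[k] H) ⊗[k] (B ⊗[k] H)) :
    smL εB (smR (smashCounit k εB εH) x)
      = smR εB (TensorProduct.map (smL εB) (smR εH) x) := by
  induction x with
  | zero => simp
  | add x y hx hy => simp only [map_add, hx, hy]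
  | tmul x y =>
  induction y with
  | zero => simp
  | add x y hx hy => simp only [map_add, tmul_add, hx, hy]
  | tmul b h =>
    simp only [map_tmul, smR_tmul, map_smul, smashCounit_tmul, smul_eq_mul, mul_comm]

/-- naturality of the core -/
lemma core_nat (φ : B ⊗[k] H →ₗ[k] H ⊗[k] B) (f : B →ₗ[k] B) (g : H →ₗ[k] H)
    (hn : ∀ b h, φ (f b ⊗ₜ g h) = TensorProduct.map g f (φ (b ⊗ₜ h)))
    (t : B ⊗[k] B) (s : H ⊗[k] H) :
    smashCore φ (TensorProduct.map f f t ⊗ₜ TensorProduct.map g g s)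
      = TensorProduct.map (TensorProduct.map f g) (TensorProduct.map f g)
          (smashCore φ (t ⊗ₜ s)) := by
  induction t with
  | zero => simp
  | add x y hx hy => simp only [map_add, add_tmul, hx, hy]
  | tmul b₁ b₂ =>
  induction s with
  | zero => simp
  | add x y hx hy => simp only [map_add, tmul_add, hx, hy]
  | tmul h₁ h₂ =>
  rw [map_tmul, map_tmul, smashCore_tmul, smashCore_tmul, hn]
  generalize φ (b₂ ⊗ₜ h₁) = u
  induction u with
  | zero => simp
  | tmul h b => simp only [smJ_tmul, map_tmul]
  | add x y hx hy => simp only [map_add, hx, hy]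

/-- right hand side of (M1) -/
def m1r (φ : B ⊗[k] H →ₗ[k] H ⊗[k] B) : (B ⊗[k] B) ⊗[k] H →ₗ[k] H ⊗[k] (B ⊗[k] B) :=
  (TensorProduct.assoc k H B B).toLinearMap
       ∘ₗ TensorProduct.map φ (LinearMap.id : B →ₗ[k] B)
       ∘ₗ (TensorProduct.assoc k B H B).symm.toLinearMap
       ∘ₗ TensorProduct.map (LinearMap.id : B →ₗ[k] B) φ
       ∘ₗ (TensorProduct.assoc k B B H).toLinearMap

/-- right hand side of (M2) -/
def m2r (φ : B ⊗[k] H →ₗ[k] H ⊗[k] B) : B ⊗[k] (H ⊗[k] H) →ₗ[k] (H ⊗[k] H) ⊗[k] B :=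
  (TensorProduct.assoc k H H B).symm.toLinearMap
       ∘ₗ TensorProduct.map (LinearMap.id : H →ₗ[k] H) φ
       ∘ₗ (TensorProduct.assoc k H B H).toLinearMap
       ∘ₗ TensorProduct.map φ (LinearMap.id : H →ₗ[k] H)
       ∘ₗ (TensorProduct.assoc k B H H).symm.toLinearMap

lemma m1r_tmul (φ : B ⊗[k] H →ₗ[k] H ⊗[k] B) (b b' : B) (h : H) :
    m1r φ ((b ⊗ₜ b') ⊗ₜ h) = TensorProduct.assoc k H B B (TensorProduct.map φ LinearMap.id
      ((TensorProduct.assoc k B H B).symm (b ⊗ₜ φ (b' ⊗ₜ h)))) := rfl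

lemma m2r_tmul (φ : B ⊗[k] H →ₗ[k] H ⊗[k] B) (b : B) (h h' : H) :
    m2r φ (b ⊗ₜ (h ⊗ₜ h')) = (TensorProduct.assoc k H H B).symm
      (TensorProduct.map LinearMap.id φ
      (TensorProduct.assoc k H B H (φ (b ⊗ₜ h) ⊗ₜ h'))) := rfl

/-- left coassociativity assembling map. -/
def smW (φ : B ⊗[k] H →ₗ[k] H ⊗[k] B) (b : B) (s : H ⊗[k] H) :
    H ⊗[k] (B ⊗[k] B) →ₗ[k] (B ⊗[k] H) ⊗[k] ((B ⊗[k] H) ⊗[k] (B ⊗[k] H)) :=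
  TensorProduct.map (TensorProduct.mk k B H b)
    (smashCore φ ∘ₗ (TensorProduct.mk k (B ⊗[k] B) (H ⊗[k] H)).flip s)

/-- right coassociativity assembling map. -/
def smV (φ : B ⊗[k] H →ₗ[k] H ⊗[k] B) (t : B ⊗[k] B) (h : H) :
    (H ⊗[k] H) ⊗[k] B →ₗ[k] ((B ⊗[k] H) ⊗[k] (B ⊗[k] H)) ⊗[k] (B ⊗[k] H) :=
  TensorProduct.map (smashCore φ ∘ₗ TensorProduct.mk k (B ⊗[k] B) (H ⊗[k] H) t)
    ((TensorProduct.mk k B H).flip h)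

lemma smW_tmul (φ : B ⊗[k] H →ₗ[k] H ⊗[k] B) (b : B) (s : H ⊗[k] H) (h : H) (t : B ⊗[k] B) :
    smW φ b s (h ⊗ₜ t) = (b ⊗ₜ h) ⊗ₜ smashCore φ (t ⊗ₜ s) := rfl

lemma smV_tmul (φ : B ⊗[k] H →ₗ[k] H ⊗[k] B) (b : B) (s : H ⊗[k] H) (h : H) (t : B ⊗[k] B) :
    smV φ t h (s ⊗ₜ b) = smashCore φ (t ⊗ₜ s) ⊗ₜ (b ⊗ₜ h) := rfl

/-- common form -/
def smC (b : B) (h : H) : (H ⊗[k] B) ⊗[k] (H ⊗[k] B) →ₗ[k]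
    (B ⊗[k] H) ⊗[k] ((B ⊗[k] H) ⊗[k] (B ⊗[k] H)) :=
  TensorProduct.map (TensorProduct.mk k B H b)
    (TensorProduct.map LinearMap.id ((TensorProduct.mk k B H).flip h)
      ∘ₗ (TensorProduct.assoc k B H B).symm.toLinearMap)
  ∘ₗ (TensorProduct.assoc k H B (H ⊗[k] B)).toLinearMap

lemma smC_tmul (b b' b'' : B) (h h' h'' : H) :
    smC (k := k) b h ((h' ⊗ₜ b') ⊗ₜ (h'' ⊗ₜ b''))
      = (b ⊗ₜ h') ⊗ₜ ((b' ⊗ₜ h'') ⊗ₜ (b'' ⊗ₜ h)) := rfl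

lemma W_aux (φ : B ⊗[k] H →ₗ[k] H ⊗[k] B) (b b' : B) (h₂ h₃ : H) (y : H ⊗[k] B) :
    smW φ b (h₂ ⊗ₜ h₃) (TensorProduct.assoc k H B B (y ⊗ₜ b'))
      = smC b h₃ (y ⊗ₜ φ (b' ⊗ₜ h₂)) := by
  induction y with
  | zero => simp
  | add x y hx hy => simp only [map_add, add_tmul, hx, hy]
  | tmul p q =>
  rw [assoc_tmul, smW_tmul, smashCore_tmul]
  generalize φ (b' ⊗ₜ h₂) = z
  induction z with
  | zero => simp
  | add x y hx hy => simp only [map_add, tmul_add, hx, hy]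
  | tmul p q => simp only [smC_tmul, smJ_tmul]

lemma V_aux (φ : B ⊗[k] H →ₗ[k] H ⊗[k] B) (b₁ b₂ : B) (h' h₃ : H) (z : H ⊗[k] B) :
    TensorProduct.assoc k _ _ _ (smV φ (b₁ ⊗ₜ b₂) h₃ ((TensorProduct.assoc k H H B).symm (h' ⊗ₜ z)))
      = smC b₁ h₃ (φ (b₂ ⊗ₜ h') ⊗ₜ z) := by
  induction z with
  | zero => simp
  | add x y hx hy => simp only [map_add, tmul_add, hx, hy]
  | tmul p q =>
  rw [assoc_symm_tmul, smV_tmul, smashCore_tmul]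
  generalize φ (b₂ ⊗ₜ h') = y
  induction y with
  | zero => simp
  | add x y hx hy => simp only [map_add, add_tmul, hx, hy]
  | tmul p q => simp only [smC_tmul, smJ_tmul, assoc_tmul]

lemma WV_pure (φ : B ⊗[k] H →ₗ[k] H ⊗[k] B) (b₁ b₂ b₃ : B) (h₁ h₂ h₃ : H) :
    smW φ b₁ (h₂ ⊗ₜ h₃) (m1r φ ((b₂ ⊗ₜ b₃) ⊗ₜ h₁))
      = TensorProduct.assoc k _ _ _ (smV φ (b₁ ⊗ₜ b₂) h₃ (m2r φ (b₃ ⊗ₜ (h₁ ⊗ₜ h₂)))) := by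
  rw [m1r_tmul, m2r_tmul]
  generalize φ (b₃ ⊗ₜ h₁) = x
  induction x with
  | zero => simp
  | add x y hx hy => simp only [map_add, add_tmul, tmul_add, hx, hy]
  | tmul p q =>
  simp only [assoc_symm_tmul, assoc_tmul, map_tmul, LinearMap.id_apply]
  rw [W_aux, V_aux]

/-- six-fold linear map through which both sides of coassociativity factor. -/
def smO (φ : B ⊗[k] H →ₗ[k] H ⊗[k] B) :
    (B ⊗[k] (B ⊗[k] B)) ⊗[k] (H ⊗[k] (H ⊗[k] H)) →ₗ[k]
      (B ⊗[k] H) ⊗[k] ((B ⊗[k] H) ⊗[k] (B ⊗[k] H)) :=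
  TensorProduct.map LinearMap.id (smashCore φ)
  ∘ₗ (TensorProduct.assoc k B H ((B ⊗[k] B) ⊗[k] (H ⊗[k] H))).symm.toLinearMap
  ∘ₗ TensorProduct.map LinearMap.id
      ((TensorProduct.assoc k H (B ⊗[k] B) (H ⊗[k] H)).toLinearMap
        ∘ₗ TensorProduct.map (m1r φ ∘ₗ (TensorProduct.comm k H (B ⊗[k] B)).toLinearMap)
            LinearMap.id
        ∘ₗ (TensorProduct.assoc k H (B ⊗[k] B) (H ⊗[k] H)).symm.toLinearMap)
  ∘ₗ (TensorProduct.assoc k B H ((B ⊗[k] B) ⊗[k] (H ⊗[k] H))).toLinearMap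
  ∘ₗ (TensorProduct.tensorTensorTensorComm k B (B ⊗[k] B) H (H ⊗[k] H)).toLinearMap

lemma smO_W (φ : B ⊗[k] H →ₗ[k] H ⊗[k] B) (b : B) (t : B ⊗[k] B) (h : H) (s : H ⊗[k] H) :
    smO φ ((b ⊗ₜ t) ⊗ₜ (h ⊗ₜ s)) = smW φ b s (m1r φ (t ⊗ₜ h)) := by
  simp only [smO, LinearMap.comp_apply, LinearEquiv.coe_coe, assoc_tmul, map_tmul,
    LinearMap.id_apply, assoc_symm_tmul, tensorTensorTensorComm_tmul, comm_tmul]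
  generalize m1r φ (t ⊗ₜ h) = u
  induction u with
  | zero => simp
  | add x y hx hy => simp only [map_add, add_tmul, tmul_add, hx, hy]
  | tmul p q => simp only [assoc_tmul, assoc_symm_tmul, map_tmul, LinearMap.id_apply, smW_tmul]

lemma smV_add (φ : B ⊗[k] H →ₗ[k] H ⊗[k] B) (x y : B ⊗[k] B) (h : H) :
    smV φ (x + y) h = smV φ x h + smV φ y h := by
  simp only [smV, map_add, LinearMap.comp_add, map_add_left]

lemma smV_zero (φ : B ⊗[k] H →ₗ[k] H ⊗[k] B) (h : H) : smV φ 0 h = 0 := by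
  simp only [smV, map_zero, LinearMap.comp_zero, map_zero_left]

lemma smO_V (φ : B ⊗[k] H →ₗ[k] H ⊗[k] B) (b : B) (t : B ⊗[k] B) (h : H) (s : H ⊗[k] H) :
    smO φ (TensorProduct.assoc k B B B (t ⊗ₜ b) ⊗ₜ TensorProduct.assoc k H H H (s ⊗ₜ h))
      = TensorProduct.assoc k _ _ _ (smV φ t h (m2r φ (b ⊗ₜ s))) := by
  induction t with
  | zero => simp [smV_zero]
  | add x y hx hy => simp only [map_add, add_tmul, smV_add, LinearMap.add_apply, hx, hy]
  | tmul b₁ b₂ =>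
  induction s with
  | zero => simp
  | add x y hx hy => simp only [map_add, add_tmul, tmul_add, hx, hy]
  | tmul h₁ h₂ => rw [assoc_tmul, assoc_tmul, smO_W, WV_pure]

lemma coassocL (φ : B ⊗[k] H →ₗ[k] H ⊗[k] B) (f : B →ₗ[k] B) (g : H →ₗ[k] H)
    (ΔB : B →ₗ[k] B ⊗[k] B) (ΔH : H →ₗ[k] H ⊗[k] H)
    (m1 : ∀ b h, TensorProduct.map g ΔB (φ (b ⊗ₜ h)) = m1r φ (ΔB b ⊗ₜ g h))
    (t : B ⊗[k] B) (s : H ⊗[k] H) :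
    TensorProduct.map (TensorProduct.map f g) (smashComul k φ ΔB ΔH) (smashCore φ (t ⊗ₜ s))
      = smO φ (TensorProduct.map f ΔB t ⊗ₜ TensorProduct.map g ΔH s) := by
  induction t with
  | zero => simp
  | add x y hx hy => simp only [map_add, add_tmul, hx, hy]
  | tmul b₁ b₂ =>
  induction s with
  | zero => simp
  | add x y hx hy => simp only [map_add, tmul_add, hx, hy]
  | tmul h₁ h₂ =>
  rw [map_tmul, map_tmul, smO_W, smashCore_tmul, ← m1]
  generalize φ (b₂ ⊗ₜ h₁) = u
  induction u with
  | zero => simp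
  | tmul h b => simp only [smJ_tmul, map_tmul, smW_tmul, smashComul_tmul]
  | add x y hx hy => simp only [map_add, hx, hy]

lemma coassocR (φ : B ⊗[k] H →ₗ[k] H ⊗[k] B) (f : B →ₗ[k] B) (g : H →ₗ[k] H)
    (ΔB : B →ₗ[k] B ⊗[k] B) (ΔH : H →ₗ[k] H ⊗[k] H)
    (m2 : ∀ b h, TensorProduct.map ΔH f (φ (b ⊗ₜ h)) = m2r φ (f b ⊗ₜ ΔH h))
    (t : B ⊗[k] B) (s : H ⊗[k] H) :
    TensorProduct.assoc k _ _ _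
      (TensorProduct.map (smashComul k φ ΔB ΔH) (TensorProduct.map f g) (smashCore φ (t ⊗ₜ s)))
      = smO φ (TensorProduct.assoc k B B B (TensorProduct.map ΔB f t) ⊗ₜ
          TensorProduct.assoc k H H H (TensorProduct.map ΔH g s)) := by
  induction t with
  | zero => simp
  | add x y hx hy => simp only [map_add, add_tmul, hx, hy]
  | tmul b₁ b₂ =>
  induction s with
  | zero => simp
  | add x y hx hy => simp only [map_add, tmul_add, hx, hy]
  | tmul h₁ h₂ =>
  rw [map_tmul, map_tmul, smO_V, smashCore_tmul, ← m2]
  congr 1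
  generalize φ (b₂ ⊗ₜ h₁) = u
  induction u with
  | zero => simp
  | tmul h b => simp only [smJ_tmul, map_tmul, smV_tmul, smashComul_tmul]
  | add x y hx hy => simp only [map_add, hx, hy]

lemma m1_left (φ : B ⊗[k] H →ₗ[k] H ⊗[k] B) (f : B →ₗ[k] B) (g : H →ₗ[k] H)
    (ΔB : B →ₗ[k] B ⊗[k] B) (ΔH : H →ₗ[k] H ⊗[k] H) (εB : B →ₗ[k] k) (εH : H →ₗ[k] k)
    (m3 : ∀ b h, smL εH (φ (b ⊗ₜ h)) = εH h • b)
    (hf : ∀ b, εB (f b) = εB b) (hg : ∀ h, εH (smR εH (ΔH h)) = εH h)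
    (x : (B ⊗[k] H) ⊗[k] (B ⊗[k] H)) :
    TensorProduct.map (smL εB) (TensorProduct.map (smR εH) (smR εH))
      (TensorProduct.map (TensorProduct.map f g) (smashComul k φ ΔB ΔH) x)
      = TensorProduct.map g ΔB (TensorProduct.map (smL εB) (smR εH) x) := by
  simp only [← LinearMap.comp_apply, ← map_comp]
  congr 2
  · ext b h
    simp [smL_tmul, hf]
  · ext b h : 3
    simp [smR_tmul, smashComul_tmul, RR_core φ εH m3, hg]

lemma m2_left (φ : B ⊗[k] H →ₗ[k] H ⊗[k] B) (f : B →ₗ[k] B) (g : H →ₗ[k] H)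
    (ΔB : B →ₗ[k] B ⊗[k] B) (ΔH : H →ₗ[k] H ⊗[k] H) (εB : B →ₗ[k] k) (εH : H →ₗ[k] k)
    (m4 : ∀ b h, smR εB (φ (b ⊗ₜ h)) = εB b • h)
    (hg : ∀ h, εH (g h) = εH h) (hf : ∀ b, εB (smL εB (ΔB b)) = εB b)
    (x : (B ⊗[k] H) ⊗[k] (B ⊗[k] H)) :
    TensorProduct.map (TensorProduct.map (smL εB) (smL εB)) (smR εH)
      (TensorProduct.map (smashComul k φ ΔB ΔH) (TensorProduct.map f g) x)
      = TensorProduct.map ΔH f (TensorProduct.map (smL εB) (smR εH) x) := by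
  simp only [← LinearMap.comp_apply, ← map_comp]
  congr 2
  · ext b h : 3
    simp [smL_tmul, smashComul_tmul, LL_core φ εB m4, hf]
  · ext b h
    simp [smR_tmul, hg]

lemma assoc_nat {X X' Y Y' Z Z' : Type*} [AddCommGroup X] [Module k X] [AddCommGroup Y]
    [Module k Y] [AddCommGroup Z] [Module k Z] [AddCommGroup X'] [Module k X'] [AddCommGroup Y']
    [Module k Y'] [AddCommGroup Z'] [Module k Z'] (a : X →ₗ[k] X') (b : Y →ₗ[k] Y')
    (c : Z →ₗ[k] Z') (x : (X ⊗[k] Y) ⊗[k] Z) :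
    TensorProduct.map a (TensorProduct.map b c) (TensorProduct.assoc k X Y Z x)
      = TensorProduct.assoc k X' Y' Z' (TensorProduct.map (TensorProduct.map a b) c x) :=
  LinearMap.congr_fun (f := TensorProduct.map a (TensorProduct.map b c) ∘ₗ
    (TensorProduct.assoc k X Y Z).toLinearMap) (g := (TensorProduct.assoc k X' Y' Z').toLinearMap ∘ₗ
    TensorProduct.map (TensorProduct.map a b) c) (by ext; rfl) x

lemma m1_right (φ : B ⊗[k] H →ₗ[k] H ⊗[k] B) (f : B →ₗ[k] B) (g : H →ₗ[k] H)
    (εH : H →ₗ[k] k) (hg : ∀ h, εH (g h) = εH h)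
    (hn : ∀ b h, φ (f b ⊗ₜ g h) = TensorProduct.map g f (φ (b ⊗ₜ h)))
    (t : B ⊗[k] B) (s : H ⊗[k] H) :
    TensorProduct.assoc k H B B
      (TensorProduct.map (φ ∘ₗ TensorProduct.map f g) (smR εH ∘ₗ TensorProduct.map f g)
        (smashCore φ (t ⊗ₜ s)))
      = m1r φ (TensorProduct.map f f t ⊗ₜ g (smR εH s)) := by
  induction t with
  | zero => simp
  | add x y hx hy => simp only [map_add, add_tmul, hx, hy]
  | tmul b₁ b₂ =>
  induction s with
  | zero => simp
  | add x y hx hy => simp only [map_add, tmul_add, hx, hy]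
  | tmul h₁ h₂ =>
  rw [smR_tmul, map_smul, tmul_smul, map_smul, map_tmul, m1r_tmul, smashCore_tmul, hn]
  generalize φ (b₂ ⊗ₜ h₁) = u
  induction u with
  | zero => simp
  | tmul h b => simp [smJ_tmul, smR_tmul, hg]
  | add x y hx hy => simp only [map_add, smul_add, tmul_add, hx, hy]

lemma m2_right (φ : B ⊗[k] H →ₗ[k] H ⊗[k] B) (f : B →ₗ[k] B) (g : H →ₗ[k] H)
    (εB : B →ₗ[k] k) (hf : ∀ b, εB (f b) = εB b)
    (hn : ∀ b h, φ (f b ⊗ₜ g h) = TensorProduct.map g f (φ (b ⊗ₜ h)))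
    (t : B ⊗[k] B) (s : H ⊗[k] H) :
    (TensorProduct.map (smL εB ∘ₗ TensorProduct.map f g) (φ ∘ₗ TensorProduct.map f g)
        (smashCore φ (t ⊗ₜ s)))
      = TensorProduct.assoc k H H B (m2r φ (f (smL εB t) ⊗ₜ TensorProduct.map g g s)) := by
  induction t with
  | zero => simp
  | add x y hx hy => simp only [map_add, add_tmul, hx, hy]
  | tmul b₁ b₂ =>
  induction s with
  | zero => simp
  | add x y hx hy => simp only [map_add, tmul_add, hx, hy]
  | tmul h₁ h₂ =>
  rw [smL_tmul, map_smul, ← smul_tmul', map_smul, map_tmul, m2r_tmul, smashCore_tmul, hn]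
  generalize φ (b₂ ⊗ₜ h₁) = u
  induction u with
  | zero => simp
  | tmul h b => simp [smJ_tmul, smL_tmul, hf, ← smul_tmul']
  | add x y hx hy => simp only [map_add, smul_add, add_tmul, hx, hy]

end SmashHelpers
/-- `φ` is a Hom-cotwistor iff the smash coproduct `B ⊗ H` is a
Hom-coalgebra. -/
theorem isHomCotwistor_iff_smashCoproduct_isHomCoalgebra
    {B H : Type*} [AddCommGroup B] [Module k B] [AddCommGroup H] [Module k H]
    (αB : B ≃ₗ[k] B) (ΔB : B →ₗ[k] B ⊗[k] B) (εB : B →ₗ[k] k)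
    (αH : H ≃ₗ[k] H) (ΔH : H →ₗ[k] H ⊗[k] H) (εH : H →ₗ[k] k)
    (hB : IsHomCoalgebra k αB ΔB εB) (hH : IsHomCoalgebra k αH ΔH εH)
    (φ : B ⊗[k] H →ₗ[k] H ⊗[k] B)
    (hnat : φ ∘ₗ TensorProduct.map αB.toLinearMap αH.toLinearMap
          = TensorProduct.map αH.toLinearMap αB.toLinearMap ∘ₗ φ) :
    IsHomCotwistor k αB ΔB εB αH ΔH εH φ ↔
      IsHomCoalgebra k (TensorProduct.congr αB αH) (smashComul k φ ΔB ΔH)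
        (smashCounit k εB εH) := by
  obtain ⟨hB1, hB2, hB3, hB4, hB5⟩ := hB
  obtain ⟨hH1, hH2, hH3, hH4, hH5⟩ := hH
  have hn : ∀ b h, φ (αB.toLinearMap b ⊗ₜ αH.toLinearMap h)
      = TensorProduct.map αH.toLinearMap αB.toLinearMap (φ (b ⊗ₜ h)) := fun b h =>
    LinearMap.congr_fun hnat (b ⊗ₜ h)
  have cB4 : ∀ b, smL εB (ΔB b) = αB b := hB4
  have cB5 : ∀ b, smR εB (ΔB b) = αB b := hB5
  have cH4 : ∀ b, smL εH (ΔH b) = αH b := hH4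
  have cH5 : ∀ b, smR εH (ΔH b) = αH b := hH5
  have hα : (TensorProduct.congr αB αH).toLinearMap
      = TensorProduct.map αB.toLinearMap αH.toLinearMap := rfl
  constructor
  · rintro ⟨-, M1, M2, M3, M4⟩
    have m1 : ∀ b h, TensorProduct.map αH.toLinearMap ΔB (φ (b ⊗ₜ h))
        = m1r φ (ΔB b ⊗ₜ αH.toLinearMap h) := fun b h => LinearMap.congr_fun M1 (b ⊗ₜ h)
    have m2 : ∀ b h, TensorProduct.map ΔH αB.toLinearMap (φ (b ⊗ₜ h))
        = m2r φ (αB.toLinearMap b ⊗ₜ ΔH h) := fun b h => LinearMap.congr_fun M2 (b ⊗ₜ h)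
    have m3 : ∀ b h, smL εH (φ (b ⊗ₜ h)) = εH h • b := fun b h =>
      (LinearMap.congr_fun M3 (b ⊗ₜ h)).trans (smR_tmul εH b h)
    have m4 : ∀ b h, smR εB (φ (b ⊗ₜ h)) = εB b • h := fun b h =>
      (LinearMap.congr_fun M4 (b ⊗ₜ h)).trans (smL_tmul εB b h)
    refine ⟨fun c => ?_, fun c => ?_, fun c => ?_, fun c => ?_, fun c => ?_⟩
    · induction c with
      | zero => simp
      | add x y hx hy => simp only [map_add, hx, hy]
      | tmul b h =>
        rw [hα, smashComul_tmul, ← core_nat φ _ _ hn, ← hB1, ← hH1]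
        rfl
    · induction c with
      | zero => simp
      | add x y hx hy => simp only [map_add, hx, hy]
      | tmul b h => rw [TensorProduct.congr_tmul, smashCounit_tmul, smashCounit_tmul, hB2, hH2]
    · induction c with
      | zero => simp
      | add x y hx hy => simp only [map_add, hx, hy]
      | tmul b h =>
        rw [hα, smashComul_tmul, coassocL φ _ _ ΔB ΔH m1, coassocR φ _ _ ΔB ΔH m2, hB3, hH3]
    · change smL (smashCounit k εB εH) _ = _
      induction c with
      | zero => simp
      | add x y hx hy => simp only [map_add, hx, hy]
      | tmul b h => rw [smashComul_tmul, counitL_core φ εB εH m3, cB4, cH4, congr_tmul]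
    · change smR (smashCounit k εB εH) _ = _
      induction c with
      | zero => simp
      | add x y hx hy => simp only [map_add, hx, hy]
      | tmul b h => rw [smashComul_tmul, counitR_core φ εB εH m4, cB5, cH5, congr_tmul]
  · rintro ⟨-, -, C3, C4, C5⟩
    rw [hα] at C3
    have m3 : ∀ b h, smL εH (φ (b ⊗ₜ h)) = εH h • b := by
      intro b h
      obtain ⟨b, rfl⟩ := αB.surjective b
      obtain ⟨h, rfl⟩ := αH.surjective h
      have e : smL (smashCounit k εB εH) (smashCore φ (ΔB b ⊗ₜ ΔH h)) = αB b ⊗ₜ αH h :=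
        C4 (b ⊗ₜ h)
      have e' := congrArg (smR εH) e
      rw [counitL_Q, Q_core, cB4, cH5, smR_tmul] at e'
      exact e'
    have m4 : ∀ b h, smR εB (φ (b ⊗ₜ h)) = εB b • h := by
      intro b h
      obtain ⟨b, rfl⟩ := αB.surjective b
      obtain ⟨h, rfl⟩ := αH.surjective h
      have e : smR (smashCounit k εB εH) (smashCore φ (ΔB b ⊗ₜ ΔH h)) = αB b ⊗ₜ αH h :=
        C5 (b ⊗ₜ h)
      have e' := congrArg (smL εB) e
      rw [counitR_Q, Q_core, cB4, cH5, smL_tmul] at e'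
      exact e'
    have hQ : TensorProduct.map (smL εB) (smR εH) ∘ₗ smashComul k φ ΔB ΔH
        = φ ∘ₗ TensorProduct.map αB.toLinearMap αH.toLinearMap := by
      ext b h : 3
      change TensorProduct.map (smL εB) (smR εH) (smashCore φ (ΔB b ⊗ₜ ΔH h)) = _
      rw [Q_core, cB4, cH5]
      rfl
    have m1 : ∀ b h, TensorProduct.map αH.toLinearMap ΔB (φ (b ⊗ₜ h))
        = m1r φ (ΔB b ⊗ₜ αH.toLinearMap h) := by
      intro b h
      obtain ⟨b, rfl⟩ := αB.surjective b
      obtain ⟨h, rfl⟩ := αH.surjective h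
      have e := congrArg (TensorProduct.map (smL εB) (TensorProduct.map (smR εH) (smR εH)))
        (C3 (b ⊗ₜ h))
      rw [m1_left φ _ _ ΔB ΔH εB εH m3 hB2 (fun h => by rw [cH5, hH2]), assoc_nat,
        ← LinearMap.comp_apply (TensorProduct.map (TensorProduct.map _ _) _), ← map_comp, hQ,
        smashComul_tmul, Q_core, m1_right φ _ _ εH hH2 hn, cB4, cH5, ← hB1] at e
      exact e
    have m2 : ∀ b h, TensorProduct.map ΔH αB.toLinearMap (φ (b ⊗ₜ h))
        = m2r φ (αB.toLinearMap b ⊗ₜ ΔH h) := by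
      intro b h
      obtain ⟨b, rfl⟩ := αB.surjective b
      obtain ⟨h, rfl⟩ := αH.surjective h
      have e := congrArg (TensorProduct.map (smL εB) (TensorProduct.map (smL εB) (smR εH)))
        (C3 (b ⊗ₜ h))
      rw [assoc_nat, m2_left φ _ _ ΔB ΔH εB εH m4 hH2 (fun h => by rw [cB4, hB2]),
        ← LinearMap.comp_apply (TensorProduct.map _ (TensorProduct.map _ _)), ← map_comp, hQ,
        smashComul_tmul, Q_core, m2_right φ _ _ εB hB2 hn, cB4, cH5, ← hH1] at e
      exact ((TensorProduct.assoc k H H B).injective e).symm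
    refine ⟨hnat, ?_, ?_, ?_, ?_⟩
    · exact TensorProduct.ext' m1
    · exact TensorProduct.ext' m2
    · exact TensorProduct.ext' fun b h => (m3 b h).trans (smR_tmul εH b h).symm
    · exact TensorProduct.ext' fun b h => (m4 b h).trans (smL_tmul εB b h).symm
end
end
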